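/- arXiv:1904.07210 — 2 statements merged into one kernel-verified Lean document; each statement's English description precedes it below -/
import Mathlib

section
/- Let H be a complex Hilbert space and let T₁ and T₂ be densely defined self-adjoint linear operators on H that are nonnegative (i.e. ⟨Tᵢu, u⟩ ≥ 0 for all u in Dom(Tᵢ)), and assume Dom(T₁) ∩ Dom(T₂) is dense in H. Assume further: (i) there is a constant τ > 0 such that ⟨T₂u, u⟩ ≥ τ‖u‖² for every u ∈ Dom(T₂) (so that T₂ is a bijection of Dom(T₂) onto H, with bounded inverse T₂⁻¹); and (ii) there is a constant ξ with 0 ≤ ξ < 1 such that for every u ∈ Dom(T₁) and every v ∈ Dom(T₂) with T₂v = u one has Re⟨T₁u, v⟩ + ξ‖u‖² ≥ 0. Then the operator T₁ + T₂, with domain Dom(T₁) ∩ Dom(T₂), is self-adjoint. -/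
/-! Since `T₁ + T₂` is densely defined and symmetric, it suffices that it is surjective. For `f : H`
replace `T₁` by its Yosida approximation `Y_l = T₁ (1 + l T₁)⁻¹`, which is bounded, symmetric and
nonnegative; then `T₂ + Y_l` is self-adjoint and coercive, so `T₂ v_l + Y_l v_l = f` is solvable
(`exists_resolvent`). With `z = T₂ v_l` and `u = (1 + l T₁)⁻¹ z` one has `z = u + l T₁ u`, hence
`Re ⟪Y_l v_l, z⟫ = Re ⟪T₁ u, T₂⁻¹ u⟫ + l Re ⟪T₁ u, T₂⁻¹ T₁ u⟫ ≥ -ξ ‖u‖² ≥ -ξ ‖z‖²`, and pairing the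
equation with `z` gives `‖T₂ v_l‖ ≤ ‖f‖ / (1 - ξ)` uniformly in `l` (`exists_approx`). Consequently
`Y_l v_l` is bounded as well, and monotonicity of `T₁` with coercivity of `T₂` gives
`‖v_l - v_m‖² = O(l + m)`. The limit `v` of `v_l` as `l → 0` lies in both domains by
self-adjointness (`mem_domain_of_bounded`), and `(T₁ + T₂) v = f`.

Operators are mostly handled through their graphs `G ≤ H × H`; self-adjointness reads
`G.adjoint = G`. -/

open scoped InnerProductSpace

section SohrAux

variable {H : Type*} [NormedAddCommGroup H] [InnerProductSpace ℂ H]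

theorem graph_symm {G : Submodule ℂ (H × H)} (hG : G.adjoint = G) {x x' y y' : H}
    (hx : (x, x') ∈ G) (hy : (y, y') ∈ G) : ⟪x', y⟫_ℂ = ⟪x, y'⟫_ℂ := by
  rw [← hG, Submodule.mem_adjoint_iff] at hy
  exact sub_eq_zero.1 (hy _ _ hx)

/-- A self-adjoint operator plus a bounded symmetric operator `B` is boundedly invertible as soon
as the sum is coercive: the range is closed by the coercivity estimate, and a vector orthogonal to
it lies in the kernel. -/
theorem exists_resolvent [CompleteSpace H] {G : Submodule ℂ (H × H)} (hG : G.adjoint = G)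
    (hcl : IsClosed (G : Set (H × H)))
    (B : H →L[ℂ] H) (hB : ∀ x y, ⟪B x, y⟫_ℂ = ⟪x, B y⟫_ℂ) {c : ℝ} (hc : 0 < c)
    (hco : ∀ x x', (x, x') ∈ G → c * ‖x‖ ^ 2 ≤ (⟪x' + B x, x⟫_ℂ).re) :
    ∃ R : H →L[ℂ] H, ∀ f, (R f, f - B (R f)) ∈ G := by
  have : CompleteSpace G := hcl.completeSpace_coe
  let g : G →L[ℂ] H :=
    (ContinuousLinearMap.snd ℂ H H + B.comp (ContinuousLinearMap.fst ℂ H H)).comp G.subtypeL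
  have hg : ∀ p : G, g p = p.1.2 + B p.1.1 := fun p => rfl
  have hb : ∀ p : G, c * ‖p.1.1‖ ≤ ‖g p‖ := by
    rintro ⟨⟨x, x'⟩, hp⟩
    have h1 := hco x x' hp
    have h2 := (Complex.re_le_norm _).trans (norm_inner_le_norm (𝕜 := ℂ) (x' + B x) x)
    rw [hg]
    dsimp only
    rcases (norm_nonneg x).eq_or_lt with h | h
    · rw [← h]; simp
    · refine le_of_mul_le_mul_right ?_ h
      nlinarith
  have hanti : AntilipschitzWith (1 + (1 + ‖B‖) / c).toNNReal g := by
    refine AddMonoidHomClass.antilipschitz_of_bound g fun p => ?_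
    have h1 := hb p
    have h2 : ‖p.1.2‖ ≤ ‖g p‖ + ‖B‖ * ‖p.1.1‖ := by
      calc ‖p.1.2‖ = ‖g p - B p.1.1‖ := by rw [hg]; simp
        _ ≤ ‖g p‖ + ‖B p.1.1‖ := norm_sub_le _ _
        _ ≤ _ := by gcongr; exact B.le_opNorm _
    have h0 : 0 ≤ ‖B‖ := norm_nonneg _
    rw [Real.coe_toNNReal _ (by positivity)]
    have h3 : ‖p.1.1‖ ≤ ‖g p‖ / c := by rw [le_div_iff₀ hc]; linarith
    have h4 : (1 + (1 + ‖B‖) / c) * ‖g p‖ = ‖g p‖ + ‖g p‖ / c + ‖B‖ * (‖g p‖ / c) := by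
      field_simp; ring
    have h5 := mul_le_mul_of_nonneg_left h3 h0
    have h6 : 0 ≤ ‖g p‖ / c := by positivity
    have h7 : 0 ≤ ‖B‖ * (‖g p‖ / c) := by positivity
    rw [h4]
    change max ‖p.1.1‖ ‖p.1.2‖ ≤ _
    exact max_le (by linarith [norm_nonneg (g p)]) (by linarith)
  have hker : g.ker = ⊥ := LinearMap.ker_eq_bot.2 hanti.injective
  have hclr : IsClosed (g.range : Set H) := by
    have h : IsClosed (Set.range g) := hanti.isClosed_range g.uniformContinuous
    exact h
  have hran : g.range = ⊤ := by
    have : CompleteSpace g.range := hclr.completeSpace_coe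
    rw [← Submodule.orthogonal_eq_bot_iff, Submodule.eq_bot_iff]
    intro y hy
    rw [Submodule.mem_orthogonal] at hy
    have hmem : (y, -B y) ∈ G := by
      rw [← hG, Submodule.mem_adjoint_iff]
      intro x x' hx
      have := hy _ (LinearMap.mem_range_self g.toLinearMap ⟨(x, x'), hx⟩)
      have h' : ⟪x' + B x, y⟫_ℂ = 0 := this
      rw [inner_add_left, hB] at h'
      simpa using h'
    have h := hco _ _ hmem
    simp only [neg_add_cancel, inner_zero_left, Complex.zero_re] at h
    have : ‖y‖ ^ 2 ≤ 0 := by nlinarith [sq_nonneg ‖y‖]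
    simpa using this
  let e := ContinuousLinearEquiv.ofBijective g hker hran
  refine ⟨(ContinuousLinearMap.fst ℂ H H).comp (G.subtypeL.comp e.symm.toContinuousLinearMap),
    fun f => ?_⟩
  have h : (e.symm f).1.2 + B (e.symm f).1.1 = f := by
    rw [← hg]
    exact ContinuousLinearEquiv.ofBijective_apply_symm_apply g hker hran f
  have h' : f - B (e.symm f).1.1 = (e.symm f).1.2 := by
    rw [← eq_sub_iff_add_eq] at h
    exact h.symm
  change ((e.symm f).1.1, f - B (e.symm f).1.1) ∈ G
  rw [h']
  exact (e.symm f).2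

/-- The Yosida approximation `Y = T (1 + l T)⁻¹` of a nonnegative self-adjoint operator,
characterized by `Y w = T (w - l Y w)`. -/
theorem exists_yosida [CompleteSpace H] {G : Submodule ℂ (H × H)} (hG : G.adjoint = G)
    (hcl : IsClosed (G : Set (H × H))) (hnn : ∀ x x', (x, x') ∈ G → 0 ≤ (⟪x', x⟫_ℂ).re)
    {l : ℝ} (hl : 0 < l) :
    ∃ Y : H →L[ℂ] H, ∀ w, (w - (l : ℂ) • Y w, Y w) ∈ G := by
  have hlne : (l : ℂ) ≠ 0 := by exact_mod_cast hl.ne'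
  obtain ⟨R, hR⟩ := exists_resolvent hG hcl ((l : ℂ)⁻¹ • ContinuousLinearMap.id ℂ H)
    (by intro x y; simp [mul_comm]) (inv_pos.2 hl) (by
      intro x x' hx
      have h := hnn x x' hx
      have h2 : (⟪(l : ℂ)⁻¹ • x, x⟫_ℂ).re = l⁻¹ * ‖x‖ ^ 2 := by
        rw [inner_smul_left, map_inv₀, Complex.conj_ofReal, ← Complex.ofReal_inv,
          Complex.re_ofReal_mul]
        exact congrArg _ (inner_self_eq_norm_sq (𝕜 := ℂ) x)
      simp only [smul_apply, ContinuousLinearMap.id_apply, inner_add_left,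
        Complex.add_re, h2]
      linarith)
  refine ⟨(l : ℂ)⁻¹ • (ContinuousLinearMap.id ℂ H - (l : ℂ)⁻¹ • R), fun w => ?_⟩
  have h := G.smul_mem (l : ℂ)⁻¹ (hR w)
  convert h using 1
  simp [smul_sub, smul_smul, hlne]

/-- The uniform bounds for the approximating equation `T₂ v + Y_l v = f`: here `y = Y_l v`,
`z = T₂ v`, and `v - l y = (1 + l T₁)⁻¹ v`. -/
theorem exists_approx [CompleteSpace H] {G₁ G₂ : Submodule ℂ (H × H)}
    (hG₁ : G₁.adjoint = G₁) (hcl₁ : IsClosed (G₁ : Set (H × H)))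
    (hG₂ : G₂.adjoint = G₂) (hcl₂ : IsClosed (G₂ : Set (H × H)))
    (hnn : ∀ x x', (x, x') ∈ G₁ → 0 ≤ (⟪x', x⟫_ℂ).re)
    {τ : ℝ} (hτ : 0 < τ) (hco : ∀ x x', (x, x') ∈ G₂ → τ * ‖x‖ ^ 2 ≤ (⟪x', x⟫_ℂ).re)
    {ξ : ℝ} (hξ0 : 0 ≤ ξ) (hξ1 : ξ < 1)
    (hsb : ∀ u u' v, (u, u') ∈ G₁ → (v, u) ∈ G₂ → 0 ≤ (⟪u', v⟫_ℂ).re + ξ * ‖u‖ ^ 2)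
    (f : H) {l : ℝ} (hl : 0 < l) :
    ∃ v y z : H, (v - (l : ℂ) • y, y) ∈ G₁ ∧ (v, z) ∈ G₂ ∧ y + z = f ∧
      ‖z‖ ≤ ‖f‖ / (1 - ξ) := by
  obtain ⟨Y, hY⟩ := exists_yosida hG₁ hcl₁ hnn hl
  have hsq : ∀ w : H, (⟪w, (l : ℂ) • w⟫_ℂ).re = l * ‖w‖ ^ 2 := by
    intro w
    rw [inner_smul_right, Complex.re_ofReal_mul]
    exact congrArg _ (inner_self_eq_norm_sq (𝕜 := ℂ) w)
  have hYs : ∀ x y, ⟪Y x, y⟫_ℂ = ⟪x, Y y⟫_ℂ := by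
    intro x y
    have h := graph_symm hG₁ (hY x) (hY y)
    simpa [inner_sub_left, inner_sub_right, inner_smul_left, inner_smul_right] using h
  have hYn : ∀ w, 0 ≤ (⟪Y w, w⟫_ℂ).re := by
    intro w
    have h := hnn _ _ (hY w)
    rw [inner_sub_right, Complex.sub_re, hsq] at h
    have : 0 ≤ l * ‖Y w‖ ^ 2 := by positivity
    linarith
  obtain ⟨R, hR⟩ := exists_resolvent hG₂ hcl₂ Y hYs hτ (by
    intro x x' hx
    rw [inner_add_left, Complex.add_re]
    linarith [hco x x' hx, hYn x])
  obtain ⟨S, hS⟩ := exists_resolvent hG₂ hcl₂ 0 (by simp) hτ (by simpa using hco)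
  simp only [zero_apply, sub_zero] at hS
  set v := R f with hv
  set z := f - Y v with hz
  have hvz : (v, z) ∈ G₂ := hR f
  refine ⟨v, Y v, z, hY v, hvz, by simp [hz], ?_⟩
  set u := z - (l : ℂ) • Y z with hu
  have huY : (u, Y z) ∈ G₁ := hY z
  have hvu : (v - (l : ℂ) • S (Y z), u) ∈ G₂ := G₂.sub_mem hvz (G₂.smul_mem _ (hS (Y z)))
  have h1 := hsb _ _ _ huY hvu
  have h2 : 0 ≤ (⟪Y z, S (Y z)⟫_ℂ).re :=
    le_trans (by positivity) (hco _ _ (hS (Y z)))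
  have h3 : ‖u‖ ^ 2 ≤ ‖z‖ ^ 2 := by
    have h4 : z = u + (l : ℂ) • Y z := by simp [hu]
    have h5 := norm_add_sq (𝕜 := ℂ) u ((l : ℂ) • Y z)
    rw [← h4] at h5
    have h6 : RCLike.re ⟪u, (l : ℂ) • Y z⟫_ℂ = l * (⟪Y z, u⟫_ℂ).re := by
      rw [inner_smul_right]
      refine (Complex.re_ofReal_mul _ _).trans ?_
      rw [← inner_conj_symm, Complex.conj_re]
    rw [h6] at h5
    have h7 := mul_nonneg hl.le (hnn _ _ huY)
    nlinarith [sq_nonneg ‖(l : ℂ) • Y z‖]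
  have h8 : -(ξ * ‖z‖ ^ 2) ≤ (⟪Y v, z⟫_ℂ).re := by
    have h9 : (⟪Y v, z⟫_ℂ).re = (⟪Y z, v⟫_ℂ).re := by
      rw [hYs, ← inner_conj_symm, Complex.conj_re]
    rw [inner_sub_right, inner_smul_right, Complex.sub_re, Complex.re_ofReal_mul] at h1
    nlinarith [mul_nonneg hl.le h2, mul_le_mul_of_nonneg_left h3 hξ0]
  have h10 : (⟪Y v, z⟫_ℂ).re + ‖z‖ ^ 2 ≤ ‖f‖ * ‖z‖ := by
    have h11 : f = Y v + z := by simp [hz]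
    have h12 := (Complex.re_le_norm _).trans (norm_inner_le_norm (𝕜 := ℂ) f z)
    have h13 : (⟪f, z⟫_ℂ).re = (⟪Y v, z⟫_ℂ).re + ‖z‖ ^ 2 := by
      conv_lhs => rw [h11, inner_add_left, inner_self_eq_norm_sq_to_K]
      norm_cast
    linarith
  rw [le_div_iff₀ (by linarith)]
  rcases (norm_nonneg z).eq_or_lt with h | h
  · rw [← h]; simp
  · refine le_of_mul_le_mul_right ?_ h
    nlinarith

/-- The domain of a self-adjoint operator contains every limit of vectors on which the operator
stays bounded. -/
theorem mem_domain_of_bounded [CompleteSpace H] {T : H →ₗ.[ℂ] H} (hT : T.adjoint = T)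
    (hG : T.graph.adjoint = T.graph) {x x' : ℕ → H} (hx : ∀ n, (x n, x' n) ∈ T.graph)
    {C : ℝ} (hC : ∀ n, ‖x' n‖ ≤ C) {v : H} (hv : Filter.Tendsto x Filter.atTop (nhds v)) :
    v ∈ T.domain := by
  rw [← hT, LinearPMap.mem_adjoint_domain_iff]
  refine AddMonoidHomClass.continuous_of_bound ((innerₛₗ ℂ v).comp T.toFun) C fun y => ?_
  change ‖⟪v, T y⟫_ℂ‖ ≤ C * ‖(y : H)‖
  have ht : Filter.Tendsto (fun n => ‖⟪x n, T y⟫_ℂ‖) Filter.atTop (nhds ‖⟪v, T y⟫_ℂ‖) :=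
    (hv.inner tendsto_const_nhds).norm
  refine le_of_tendsto' ht fun n => ?_
  rw [← graph_symm hG (hx n) (T.mem_graph y)]
  refine (norm_inner_le_norm _ _).trans ?_
  gcongr
  exact hC n

theorem mem_graph_add {T₁ T₂ : H →ₗ.[ℂ] H} {x y : H} :
    (x, y) ∈ (T₁ + T₂).graph ↔
      ∃ a b, (x, a) ∈ T₁.graph ∧ (x, b) ∈ T₂.graph ∧ a + b = y := by
  constructor
  · intro h
    obtain ⟨⟨w, hw⟩, h1, h2⟩ := (LinearPMap.mem_graph_iff _).1 h
    dsimp only at h1 h2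
    subst h1
    exact ⟨_, _, T₁.mem_graph ⟨w, hw.1⟩, T₂.mem_graph ⟨w, hw.2⟩, h2⟩
  · rintro ⟨a, b, ha, hb, rfl⟩
    obtain ⟨⟨w, hw⟩, h1, h2⟩ := (LinearPMap.mem_graph_iff _).1 ha
    obtain ⟨⟨w', hw'⟩, h1', h2'⟩ := (LinearPMap.mem_graph_iff _).1 hb
    dsimp only at h1 h2 h1' h2'
    subst h1 h2 h1' h2'
    exact (T₁ + T₂).mem_graph ⟨_, hw, hw'⟩

end SohrAux

/-- **Sohr's lemma.** Let `T₁`, `T₂` be densely defined nonnegative self-adjoint operators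
on a complex Hilbert space `H` with `Dom T₁ ⊓ Dom T₂` dense. If `⟨T₂u, u⟩ ≥ τ‖u‖²` on
`Dom T₂` for some `τ > 0`, and `Re⟨T₁u, v⟩ + ξ‖u‖² ≥ 0` whenever `u ∈ Dom T₁`, `v ∈ Dom T₂`
and `T₂v = u`, for some `0 ≤ ξ < 1`, then `T₁ + T₂` (with domain `Dom T₁ ⊓ Dom T₂`)
is self-adjoint. -/
theorem sohr_selfAdjoint
    {H : Type*} [NormedAddCommGroup H] [InnerProductSpace ℂ H] [CompleteSpace H]
    (T₁ T₂ : H →ₗ.[ℂ] H)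
    (hT₁dense : Dense (T₁.domain : Set H))
    (hT₂dense : Dense (T₂.domain : Set H))
    (hT₁sa : T₁.adjoint = T₁)
    (hT₂sa : T₂.adjoint = T₂)
    (hT₁nonneg : ∀ u : T₁.domain, 0 ≤ (⟪T₁ u, (u : H)⟫_ℂ).re)
    (hT₂nonneg : ∀ u : T₂.domain, 0 ≤ (⟪T₂ u, (u : H)⟫_ℂ).re)
    (hdense : Dense ((T₁.domain ⊓ T₂.domain : Submodule ℂ H) : Set H))
    (τ : ℝ) (hτ : 0 < τ)
    (hcoercive : ∀ u : T₂.domain, τ * ‖(u : H)‖ ^ 2 ≤ (⟪T₂ u, (u : H)⟫_ℂ).re)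
    (ξ : ℝ) (hξ0 : 0 ≤ ξ) (hξ1 : ξ < 1)
    (hsemibdd : ∀ u : T₁.domain, ∀ v : T₂.domain, T₂ v = (u : H) →
      0 ≤ (⟪T₁ u, (v : H)⟫_ℂ).re + ξ * ‖(u : H)‖ ^ 2) :
    (T₁ + T₂).adjoint = T₁ + T₂ := by
  have hG₁ : T₁.graph.adjoint = T₁.graph := by
    rw [← LinearPMap.adjoint_graph_eq_graph_adjoint hT₁dense, hT₁sa]
  have hG₂ : T₂.graph.adjoint = T₂.graph := by
    rw [← LinearPMap.adjoint_graph_eq_graph_adjoint hT₂dense, hT₂sa]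
  have hcl₁ : T₁.IsClosed := hT₁sa ▸ LinearPMap.adjoint_isClosed hT₁dense
  have hcl₂ : T₂.IsClosed := hT₂sa ▸ LinearPMap.adjoint_isClosed hT₂dense
  have hnn : ∀ x x', (x, x') ∈ T₁.graph → 0 ≤ (⟪x', x⟫_ℂ).re := by
    intro x x' h
    obtain ⟨w, h1, h2⟩ := (LinearPMap.mem_graph_iff _).1 h
    dsimp only at h1 h2
    rw [← h1, ← h2]
    exact hT₁nonneg w
  have hco : ∀ x x', (x, x') ∈ T₂.graph → τ * ‖x‖ ^ 2 ≤ (⟪x', x⟫_ℂ).re := by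
    intro x x' h
    obtain ⟨w, h1, h2⟩ := (LinearPMap.mem_graph_iff _).1 h
    dsimp only at h1 h2
    rw [← h1, ← h2]
    exact hcoercive w
  have hsb : ∀ u u' v, (u, u') ∈ T₁.graph → (v, u) ∈ T₂.graph →
      0 ≤ (⟪u', v⟫_ℂ).re + ξ * ‖u‖ ^ 2 := by
    intro u u' v h h'
    obtain ⟨w, h1, h2⟩ := (LinearPMap.mem_graph_iff _).1 h
    obtain ⟨w', h1', h2'⟩ := (LinearPMap.mem_graph_iff _).1 h'
    dsimp only at h1 h2 h1' h2'
    rw [← h1, ← h2, ← h1']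
    exact hsemibdd w w' (h2'.trans h1.symm)
  have hsymm : ∀ x x' y y', (x, x') ∈ (T₁ + T₂).graph → (y, y') ∈ (T₁ + T₂).graph →
      ⟪x', y⟫_ℂ = ⟪x, y'⟫_ℂ := by
    intro x x' y y' hx hy
    obtain ⟨a, b, ha, hb, rfl⟩ := mem_graph_add.1 hx
    obtain ⟨c, d, hc, hd, rfl⟩ := mem_graph_add.1 hy
    rw [inner_add_left, inner_add_right, graph_symm hG₁ ha hc, graph_symm hG₂ hb hd]
  have hsurj : ∀ f, ∃ v, (v, f) ∈ (T₁ + T₂).graph := by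
    intro f
    let l : ℕ → ℝ := fun n => 1 / ((n : ℝ) + 1)
    have hl : ∀ n, 0 < l n := fun n => Nat.one_div_pos_of_nat
    have hl0 : Filter.Tendsto l Filter.atTop (nhds 0) := tendsto_one_div_add_atTop_nhds_zero_nat
    choose v y z hy hz hyz hzC using fun n =>
      exists_approx hG₁ hcl₁ hG₂ hcl₂ hnn hτ hco hξ0 hξ1 hsb f (hl n)
    set C := ‖f‖ / (1 - ξ) with hC
    have hC0 : 0 ≤ C := (norm_nonneg _).trans (hzC 0)
    have hyC : ∀ n, ‖y n‖ ≤ ‖f‖ + C := by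
      intro n
      have : y n = f - z n := by rw [← hyz n]; simp
      rw [this]
      exact (norm_sub_le _ _).trans (by gcongr; exact hzC n)
    set D := ‖f‖ + C with hD
    have hD0 : 0 ≤ D := by positivity
    have hdiff : ∀ n m, τ * ‖v n - v m‖ ^ 2 ≤ 2 * D * (l n * D + l m * D) := by
      intro n m
      have h1 := hco _ _ (T₂.graph.sub_mem (hz n) (hz m))
      have h2 := hnn _ _ (T₁.graph.sub_mem (hy n) (hy m))
      have h3 : z n - z m = -(y n - y m) := by
        rw [eq_sub_of_add_eq' (hyz n), eq_sub_of_add_eq' (hyz m)]; abel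
      have h4 : v n - (l n : ℂ) • y n - (v m - (l m : ℂ) • y m)
          = (v n - v m) - ((l n : ℂ) • y n - (l m : ℂ) • y m) := by abel
      dsimp only at h1 h2
      rw [h4, inner_sub_right, Complex.sub_re] at h2
      rw [h3, inner_neg_left, Complex.neg_re] at h1
      have h5 := (Complex.abs_re_le_norm _).trans
        (norm_inner_le_norm (𝕜 := ℂ) (y n - y m) ((l n : ℂ) • y n - (l m : ℂ) • y m))
      have h6 : ‖y n - y m‖ ≤ 2 * D := by linarith [norm_sub_le (y n) (y m), hyC n, hyC m]
      have h7 : ∀ k, ‖(l k : ℂ) • y k‖ ≤ l k * D := by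
        intro k
        rw [norm_smul, Complex.norm_real, Real.norm_of_nonneg (hl k).le]
        exact mul_le_mul_of_nonneg_left (hyC k) (hl k).le
      have h8 : ‖(l n : ℂ) • y n - (l m : ℂ) • y m‖ ≤ l n * D + l m * D :=
        (norm_sub_le _ _).trans (add_le_add (h7 n) (h7 m))
      have h9 := mul_le_mul h6 h8 (norm_nonneg _) (by positivity)
      linarith [neg_abs_le (⟪y n - y m, (l n : ℂ) • y n - (l m : ℂ) • y m⟫_ℂ).re]
    have hcau : CauchySeq v := by
      refine cauchySeq_of_le_tendsto_0 (fun N => Real.sqrt (4 * D ^ 2 / τ * l N)) ?_ ?_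
      · intro n m N hn hm
        have ha : l n ≤ l N := Nat.one_div_le_one_div hn
        have hb : l m ≤ l N := Nat.one_div_le_one_div hm
        rw [dist_eq_norm]
        refine Real.le_sqrt_of_sq_le ?_
        rw [div_mul_eq_mul_div, le_div_iff₀ hτ]
        nlinarith [hdiff n m, mul_le_mul_of_nonneg_left (add_le_add ha hb) (sq_nonneg D)]
      · have := (hl0.const_mul (4 * D ^ 2 / τ)).sqrt
        simpa using this
    obtain ⟨w, hw⟩ := cauchySeq_tendsto_of_complete hcau
    have hly : Filter.Tendsto (fun n => (l n : ℂ) • y n) Filter.atTop (nhds 0) := by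
      refine squeeze_zero_norm (a := fun n => l n * D) (fun n => ?_) (by simpa using hl0.mul_const D)
      rw [norm_smul, Complex.norm_real, Real.norm_of_nonneg (hl n).le]
      exact mul_le_mul_of_nonneg_left (hyC n) (hl n).le
    have hw' : Filter.Tendsto (fun n => v n - (l n : ℂ) • y n) Filter.atTop (nhds w) := by
      simpa using hw.sub hly
    have hw₁ := mem_domain_of_bounded hT₁sa hG₁ hy hyC hw'
    have hw₂ := mem_domain_of_bounded hT₂sa hG₂ hz hzC hw
    have hwg : (w, (T₁ + T₂) ⟨w, hw₁, hw₂⟩) ∈ (T₁ + T₂).graph :=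
      (T₁ + T₂).mem_graph ⟨w, hw₁, hw₂⟩
    refine ⟨w, ?_⟩
    -- The equation passes to the limit when tested against the dense set `Dom T₁ ⊓ Dom T₂`.
    suffices h : f = (T₁ + T₂) ⟨w, hw₁, hw₂⟩ by rw [h]; exact hwg
    refine hdense.eq_of_inner_left ℂ fun x hx => ?_
    have hx₁ := T₁.mem_graph ⟨x, hx.1⟩
    have hx₂ := T₂.mem_graph ⟨x, hx.2⟩
    have hxg : (x, T₁ ⟨x, hx.1⟩ + T₂ ⟨x, hx.2⟩) ∈ (T₁ + T₂).graph :=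
      mem_graph_add.2 ⟨_, _, hx₁, hx₂, rfl⟩
    rw [hsymm _ _ _ _ hwg hxg, inner_add_right]
    have hlim := (hw'.inner (tendsto_const_nhds (x := T₁ ⟨x, hx.1⟩))).add
      (hw.inner (𝕜 := ℂ) (tendsto_const_nhds (x := T₂ ⟨x, hx.2⟩)))
    refine tendsto_nhds_unique (tendsto_const_nhds.congr fun n => ?_) hlim
    rw [← graph_symm hG₁ (hy n) hx₁, ← graph_symm hG₂ (hz n) hx₂, ← inner_add_left, hyz]
  apply LinearPMap.eq_of_eq_graph
  rw [LinearPMap.adjoint_graph_eq_graph_adjoint (T := T₁ + T₂) hdense]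
  ext ⟨y, y'⟩
  rw [Submodule.mem_adjoint_iff]
  constructor
  · intro h
    -- If the value of the adjoint at `y` is attained by `T₁ + T₂` at `v`,
    -- then `y - v` is orthogonal to the range.
    obtain ⟨v, hv⟩ := hsurj y'
    obtain ⟨s, hs⟩ := hsurj (y - v)
    have h1 := sub_eq_zero.1 (h _ _ hs)
    have h2 := hsymm _ _ _ _ hs hv
    have h3 : ⟪y - v, y - v⟫_ℂ = 0 := by
      rw [inner_sub_right, h2]
      exact sub_eq_zero.2 h1
    rw [inner_self_eq_zero, sub_eq_zero] at h3
    rwa [h3]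
  · intro h a b hab
    exact sub_eq_zero.2 (hsymm _ _ _ _ hab h)
end

section
/- Let h, σ be real numbers with 0 < h ≤ 1 and σ > 0 satisfying 286σ + 18σ² + 15σ³ ≤ 4. Let D, Q, R be nonnegative reals and L, B, P, p₁, p₂ reals satisfying: D ≤ σ·h^(7/4), |L| ≤ σ·h^(3/4), |B| ≤ σ·h^(1/2), |P| ≤ σ·h^(3/2), Q ≤ σ·h^(11/4), R ≤ σ·h^(3/2), |p₁| ≤ D·Q, and |p₂| ≤ D·R. Then |−(1/4)·h^(−3/2)·P − (3/4)·h^(−5/2)·p₁ − (15/16)·h^(−7/2)·D⁴ + (3/8)·h^(−5/2)·D²·L + (1/2)·h^(−1/2)·B + (1/2)·h^(−3/2)·p₂ + (3/4)·h^(−3/2)·L·D² − (1/2)·h^(−3/2)·L²| ≤ σ. -/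
/-!
With `t = h^(1/4) ∈ (0, 1]`, every power of `h` is an integer power of `t`, and each of the eight
summands is a constant times `t^(-n) * X` with `|X| ≤ σ^k * t^m` for some `m ≥ n`. Since `t ≤ 1`,
all powers of `t` can be dropped, so the left-hand side is at most
`(3/4)σ + (7/4)σ² + (9/8)σ³ + (15/16)σ⁴`. This is `≤ σ` as soon as `28σ + 18σ² + 15σ³ ≤ 4`,
which the assumption on `σ` implies.
-/

/-- A negative power `t^(-n)` is absorbed by a bound of order `t^m` with `m ≥ n`, as `t ≤ 1`. -/
lemma abs_inv_pow_mul_le {t c X : ℝ} {n m : ℕ} (ht0 : 0 < t) (ht1 : t ≤ 1) (hc : 0 ≤ c)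
    (hnm : n ≤ m) (hX : |X| ≤ c * t ^ m) : |(t ^ n)⁻¹ * X| ≤ c := by
  have hn : 0 < t ^ n := pow_pos ht0 n
  rw [abs_mul, abs_of_pos (inv_pos.mpr hn), inv_mul_le_iff₀ hn, mul_comm]
  exact hX.trans (mul_le_mul_of_nonneg_left (pow_le_pow_of_le_one ht0.le ht1 hnm) hc)

/-- Pointwise bound `|Δ_M²(h^(1/2))| ≤ σ` from the paper's pointwise assumptions on
`h = w⁻¹`, provided `286σ + 18σ² + 15σ³ ≤ 4`. Here `D = |dh|`, `L = Δ_M h`, `B = Δ_M²h`,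
`P = Δ_M|dh|²`, `Q = |d|dh|²|`, `R = |dΔ_M h|`, `p₁ = ⟨dh, d|dh|²⟩`, `p₂ = ⟨dh, dΔ_M h⟩`. -/
theorem bilaplacian_sqrt_h_bound (h σ : ℝ) (hh0 : 0 < h) (hh1 : h ≤ 1)
    (hσ0 : 0 < σ) (hσ : 286 * σ + 18 * σ ^ 2 + 15 * σ ^ 3 ≤ 4)
    (D Q R : ℝ) (hD0 : 0 ≤ D) (hQ0 : 0 ≤ Q) (hR0 : 0 ≤ R)
    (L B P p₁ p₂ : ℝ)
    (hD : D ≤ σ * h ^ ((7 : ℝ) / 4))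
    (hL : |L| ≤ σ * h ^ ((3 : ℝ) / 4))
    (hB : |B| ≤ σ * h ^ ((1 : ℝ) / 2))
    (hP : |P| ≤ σ * h ^ ((3 : ℝ) / 2))
    (hQ : Q ≤ σ * h ^ ((11 : ℝ) / 4))
    (hR : R ≤ σ * h ^ ((3 : ℝ) / 2))
    (hp₁ : |p₁| ≤ D * Q) (hp₂ : |p₂| ≤ D * R) :
    |(-(1 / 4)) * h ^ (-(3 : ℝ) / 2) * P - (3 / 4) * h ^ (-(5 : ℝ) / 2) * p₁
        - (15 / 16) * h ^ (-(7 : ℝ) / 2) * D ^ 4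
        + (3 / 8) * h ^ (-(5 : ℝ) / 2) * D ^ 2 * L
        + (1 / 2) * h ^ (-(1 : ℝ) / 2) * B
        + (1 / 2) * h ^ (-(3 : ℝ) / 2) * p₂
        + (3 / 4) * h ^ (-(3 : ℝ) / 2) * L * D ^ 2
        - (1 / 2) * h ^ (-(3 : ℝ) / 2) * L ^ 2| ≤ σ := by
  obtain ⟨t, ht⟩ : ∃ t, t = h ^ ((1 : ℝ) / 4) := ⟨_, rfl⟩
  have ht0 : 0 < t := ht ▸ Real.rpow_pos_of_pos hh0 _
  have ht1 : t ≤ 1 := ht ▸ Real.rpow_le_one hh0.le hh1 (by norm_num)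
  have hpow (n : ℕ) (a : ℝ) (ha : a = n / 4) : h ^ a = t ^ n := by
    rw [ht, ← Real.rpow_natCast, ← Real.rpow_mul hh0.le]
    congr 1
    rw [ha]
    ring
  have hneg (n : ℕ) (a : ℝ) (ha : a = -(n / 4)) : h ^ a = (t ^ n)⁻¹ := by
    rw [ha, Real.rpow_neg hh0.le, hpow n _ rfl]
  rw [hpow 7 _ (by norm_num)] at hD
  rw [hpow 3 _ (by norm_num)] at hL
  rw [hpow 2 _ (by norm_num)] at hB
  rw [hpow 6 _ (by norm_num)] at hP hR
  rw [hpow 11 _ (by norm_num)] at hQ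
  rw [hneg 6 (-3 / 2) (by norm_num), hneg 10 (-5 / 2) (by norm_num),
    hneg 14 (-7 / 2) (by norm_num), hneg 2 (-1 / 2) (by norm_num)]
  have hD2 : D ^ 2 ≤ σ ^ 2 * t ^ 14 := by
    calc D ^ 2 ≤ (σ * t ^ 7) ^ 2 := by gcongr
      _ = _ := by ring
  have hLD : |D ^ 2 * L| ≤ σ ^ 3 * t ^ 17 := by
    rw [abs_mul, abs_of_nonneg (sq_nonneg D)]
    calc D ^ 2 * |L| ≤ (σ ^ 2 * t ^ 14) * (σ * t ^ 3) := by gcongr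
      _ = _ := by ring
  have e1 := abs_inv_pow_mul_le ht0 ht1 hσ0.le le_rfl hP
  have e2 : |(t ^ 10)⁻¹ * p₁| ≤ σ ^ 2 := by
    refine abs_inv_pow_mul_le (m := 18) ht0 ht1 (by positivity) (by norm_num) ?_
    calc |p₁| ≤ D * Q := hp₁
      _ ≤ (σ * t ^ 7) * (σ * t ^ 11) := by gcongr
      _ = _ := by ring
  have e3 : |(t ^ 14)⁻¹ * D ^ 4| ≤ σ ^ 4 := by
    refine abs_inv_pow_mul_le (m := 28) ht0 ht1 (by positivity) (by norm_num) ?_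
    rw [abs_of_nonneg (by positivity)]
    calc D ^ 4 ≤ (σ * t ^ 7) ^ 4 := by gcongr
      _ = _ := by ring
  have e4 : |(t ^ 10)⁻¹ * (D ^ 2 * L)| ≤ σ ^ 3 :=
    abs_inv_pow_mul_le ht0 ht1 (by positivity) (by norm_num) hLD
  have e5 := abs_inv_pow_mul_le ht0 ht1 hσ0.le le_rfl hB
  have e6 : |(t ^ 6)⁻¹ * p₂| ≤ σ ^ 2 := by
    refine abs_inv_pow_mul_le (m := 13) ht0 ht1 (by positivity) (by norm_num) ?_
    calc |p₂| ≤ D * R := hp₂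
      _ ≤ (σ * t ^ 7) * (σ * t ^ 6) := by gcongr
      _ = _ := by ring
  have e7 : |(t ^ 6)⁻¹ * (D ^ 2 * L)| ≤ σ ^ 3 :=
    abs_inv_pow_mul_le ht0 ht1 (by positivity) (by norm_num) hLD
  have e8 : |(t ^ 6)⁻¹ * L ^ 2| ≤ σ ^ 2 := by
    refine abs_inv_pow_mul_le (m := 6) ht0 ht1 (by positivity) le_rfl ?_
    rw [abs_pow]
    calc |L| ^ 2 ≤ (σ * t ^ 3) ^ 2 := by gcongr
      _ = _ := by ring
  have hfin : 3 / 4 * σ + 7 / 4 * σ ^ 2 + 9 / 8 * σ ^ 3 + 15 / 16 * σ ^ 4 ≤ σ := by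
    nlinarith [mul_le_mul_of_nonneg_left hσ hσ0.le, sq_nonneg σ]
  rw [abs_le] at *
  constructor <;> linarith
end
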